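/- Boltzmann's H-theorem (entropy production is nonnegative). Let N ≥ 2 and let the collision kernel B(|v−v_*|, cos θ) = Φ(|v−v_*|) b(cos θ) be as in (H1)-(H2)-(H3). Let f : ℝ^N → (0,∞) be measurable and such that the function (v, v_*, σ) ↦ B(|v−v_*|, cos θ) |f(v')f(v'_*) − f(v)f(v_*)| · |log(f(v')f(v'_*)) − log(f(v)f(v_*))| is integrable on ℝ^N × ℝ^N × S^{N-1} and (v,v_*,σ) ↦ B |f'f'_* − f f_*| |log f(v)| is integrable. Then − ∫_{ℝ^N} Q(f,f)(v) log f(v) dv ≥ 0; indeed − ∫ Q(f,f) log f dv = (1/4) ∫_{ℝ^N×ℝ^N×S^{N-1}} B (f(v')f(v'_*) − f(v)f(v_*)) (log(f(v')f(v'_*)) − log(f(v)f(v_*))) dv dv_* dσ ≥ 0. -/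

import Mathlib

/-!
The entropy production `-∫ Q(f,f) log f` is symmetrized by two measure-preserving changes of
variables on triples `(v, v_*, σ)`. The exchange of particles `(v, v_*, σ) ↦ (v_*, v, -σ)` leaves
`B (f' f'_* - f f_*)` invariant, and the collision map `(v, v_*, σ) ↦ (v', v'_*, k)`, with `k` the
direction of `v - v_*`, changes its sign. Averaging `-∫ B (f' f'_* - f f_*) log f` over the four
resulting forms gives the formula with the factor `1/4`, and nonnegativity follows from the
monotonicity of `log`.

The analytic point is that the collision map preserves measure (`measurePreserving_collide`). In
coordinates given by the center of mass and the relative velocity `v - v_* = r k`, it exchanges `k`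
and `σ`. Lebesgue measure decomposes as `r^(N-1) dr dk` with `dk` the measure `toSphere`, whereas
`σ` carries the Hausdorff measure of the sphere. These two are proportional (`exists_sphSub_eq`):
both are invariant under isometries, which act transitively on the sphere, so that caps of equal
radius have equal mass, and Christensen's lemma (`uniform_measure_unique`) applies. Finiteness of
the Hausdorff measure comes from the integrability of the angular kernel
(`KernelOK.isFiniteMeasure`).
-/

open MeasureTheory Real RealInnerProductSpace ENNReal

noncomputable section

/-- Euclidean space `ℝ^N`. -/
abbrev Rn (N : ℕ) := EuclideanSpace ℝ (Fin N)

/-- Surface measure on the unit sphere `S^{N-1} ⊂ ℝ^N`: the `(N-1)`-dimensional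
Hausdorff measure restricted to the sphere. -/
def sphMeas (N : ℕ) : Measure (Rn N) :=
  (μH[(N : ℝ) - 1]).restrict (Metric.sphere (0 : Rn N) 1)

/-- Post-collisional velocity `v' = (v+v_*)/2 + (|v-v_*|/2) σ`. -/
def vP (N : ℕ) (v w σ : Rn N) : Rn N :=
  (2:ℝ)⁻¹ • (v + w) + (‖v - w‖ / 2) • σ

/-- Post-collisional velocity `v'_* = (v+v_*)/2 - (|v-v_*|/2) σ`. -/
def vSP (N : ℕ) (v w σ : Rn N) : Rn N :=
  (2:ℝ)⁻¹ • (v + w) - (‖v - w‖ / 2) • σ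

/-- Cosine of the deviation angle: `cos θ = σ · (v - v_*)/|v - v_*|`. -/
def cosTheta (N : ℕ) (v w σ : Rn N) : ℝ := ⟪σ, v - w⟫ / ‖v - w‖

/-- The Boltzmann collision operator `Q(g,f)` for a kernel `B = Φ(|v-v_*|) b(cos θ)`. -/
def Qop (N : ℕ) (Φ b : ℝ → ℝ) (g f : Rn N → ℝ) (v : Rn N) : ℝ :=
  ∫ w : Rn N, ∫ σ : Rn N,
    Φ ‖v - w‖ * b (cosTheta N v w σ) *
      (g (vSP N v w σ) * f (vP N v w σ) - g w * f v) ∂(sphMeas N)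

/-- Weighted norm `‖f‖_{L¹_s} = ∫ |f(v)| (1+|v|²)^{s/2} dv`, valued in `[0,∞]`. -/
def L1s (N : ℕ) (s : ℝ) (f : Rn N → ℝ) : ℝ≥0∞ :=
  ∫⁻ v : Rn N, ENNReal.ofReal (|f v| * (1 + ‖v‖ ^ 2) ^ (s / 2))

/-- Weighted norm `‖f‖_{L²_s} = (∫ |f(v)|² (1+|v|²)^s dv)^{1/2}`, valued in `[0,∞]`. -/
def L2s (N : ℕ) (s : ℝ) (f : Rn N → ℝ) : ℝ≥0∞ :=
  (∫⁻ v : Rn N, ENNReal.ofReal (|f v| ^ 2 * (1 + ‖v‖ ^ 2) ^ s)) ^ (1/2 : ℝ)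

/-- Assumptions (H1)-(H2)-(H3) on the collision kernel `B = Φ(|v-v_*|) b(cos θ)`. -/
structure KernelOK (N : ℕ) (Φ b : ℝ → ℝ) (γ : ℝ) : Prop where
  gamma_mem : γ ∈ Set.Ioc (-2 : ℝ) 0
  phi_smooth : ContDiff ℝ (⊤ : ℕ∞) Φ
  phi_bounds : ∃ cΦ CΦ : ℝ, 0 < cΦ ∧ 0 < CΦ ∧ ∀ z : Rn N,
    cΦ * (1 + ‖z‖) ^ γ ≤ Φ ‖z‖ ∧ Φ ‖z‖ ≤ CΦ * (1 + ‖z‖) ^ γ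
  phi_deriv_bounds : ∀ p : ℕ, 0 < p → ∃ C : ℝ, ∀ r : ℝ, |iteratedDeriv p Φ r| ≤ C
  b_pos : ∃ b₀ : ℝ, 0 < b₀ ∧ ∀ x : ℝ, b₀ ≤ b x
  b_integrable : ∀ u : Rn N, ‖u‖ = 1 →
    Integrable (fun σ : Rn N => b ⟪u, σ⟫) (sphMeas N)

/-- A solution of the spatially homogeneous Boltzmann equation with initial datum `f_in`:
nonnegative, measurable, in `L¹_2` at each time, satisfying the Duhamel (integrated) form of
the equation, and conserving mass, momentum and energy. -/
structure IsSolution (N : ℕ) (Φ b : ℝ → ℝ) (f : ℝ → Rn N → ℝ) (fIn : Rn N → ℝ) : Prop where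
  nonneg : ∀ t v, 0 ≤ f t v
  meas : Measurable (Function.uncurry f)
  mem_L1_2 : ∀ t : ℝ, 0 ≤ t → L1s N 2 (f t) < ⊤
  eqn : ∀ t : ℝ, 0 ≤ t → ∀ v : Rn N,
    f t v = fIn v + ∫ τ in Set.Ioc (0:ℝ) t, Qop N Φ b (f τ) (f τ) v
  mass : ∀ t : ℝ, 0 ≤ t → ∫ v : Rn N, f t v = ∫ v : Rn N, fIn v
  momentum : ∀ t : ℝ, 0 ≤ t → ∀ i : Fin N,
    ∫ v : Rn N, f t v * v i = ∫ v : Rn N, fIn v * v i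
  energy : ∀ t : ℝ, 0 ≤ t →
    ∫ v : Rn N, f t v * ‖v‖ ^ 2 = ∫ v : Rn N, fIn v * ‖v‖ ^ 2

/-- The product measure `dv dv_* dσ` on `ℝ^N × ℝ^N × S^{N-1}`. -/
def tripleMeas (N : ℕ) : Measure (Rn N × Rn N × Rn N) :=
  (volume : Measure (Rn N)).prod ((volume : Measure (Rn N)).prod (sphMeas N))

/-! ### Uniqueness of uniformly distributed measures -/

/-- Christensen's lemma: two finite measures under each of which the measure of a ball depends only
on its radius are proportional. Double counting of the pairs at distance less than `r` shows that
the ratio of the measures of balls of radius `r` is the ratio of the total masses, for every `r`;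
the same count, restricted to the points whose `r`-ball lies in an open set `U`, compares the two
measures of `U` as `r → 0`. -/
theorem uniform_measure_unique {X : Type*} [MetricSpace X] [SecondCountableTopology X]
    [MeasurableSpace X] [BorelSpace X] (μ ν : Measure X) [IsFiniteMeasure μ] [IsFiniteMeasure ν]
    (hμ : ∀ x y r, μ (Metric.ball x r) = μ (Metric.ball y r))
    (hν : ∀ x y r, ν (Metric.ball x r) = ν (Metric.ball y r))
    (hpos : ∀ x r, 0 < r → ν (Metric.ball x r) ≠ 0) :
    ν Set.univ • μ = μ Set.univ • ν := by
  -- double counting of the pairs `(x, y)` with `x ∈ A`, `y ∈ U`, `dist x y < r`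
  have hball : ∀ r : ℝ, MeasurableSet {p : X × X | dist p.1 p.2 < r} := fun r =>
    (isOpen_lt continuous_dist continuous_const).measurableSet
  have key : ∀ (A U : Set X) (r : ℝ) (x₀ : X), MeasurableSet A → MeasurableSet U →
      (∀ x ∈ A, Metric.ball x r ⊆ U) →
      μ A * ν (Metric.ball x₀ r) ≤ μ (Metric.ball x₀ r) * ν U := by
    intro A U r x₀ hA hU hAU
    let E : Set (X × X) := {p | dist p.1 p.2 < r} ∩ A ×ˢ Set.univ
    have hE : MeasurableSet E := (hball r).inter (hA.prod MeasurableSet.univ)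
    have h1 : μ A * ν (Metric.ball x₀ r) ≤ μ.prod ν E := by
      rw [Measure.prod_apply hE]
      calc μ A * ν (Metric.ball x₀ r) = ∫⁻ _ in A, ν (Metric.ball x₀ r) ∂μ := by
            simp [mul_comm]
        _ ≤ ∫⁻ x in A, ν (Prod.mk x ⁻¹' E) ∂μ := by
            refine setLIntegral_mono' hA fun x hx => ?_
            rw [hν x₀ x r]
            refine measure_mono fun y hy => ⟨?_, hx, trivial⟩
            simpa [dist_comm] using hy
        _ ≤ _ := setLIntegral_le_lintegral _ _
    have h2 : μ.prod ν E ≤ μ (Metric.ball x₀ r) * ν U := by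
      rw [Measure.prod_apply_symm hE]
      calc ∫⁻ y, μ ((fun x => (x, y)) ⁻¹' E) ∂ν
          ≤ ∫⁻ y, U.indicator (fun _ => μ (Metric.ball x₀ r)) y ∂ν := by
            refine lintegral_mono fun y => ?_
            by_cases hy : y ∈ U
            · rw [Set.indicator_of_mem hy, hμ x₀ y r]
              exact measure_mono fun x hx => hx.1
            · rw [Set.indicator_of_notMem hy, nonpos_iff_eq_zero]
              convert measure_empty (μ := μ)
              refine Set.eq_empty_of_forall_notMem fun x hx => hy (hAU x hx.2.1 ?_)
              simpa [dist_comm] using hx.1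
        _ = _ := by rw [lintegral_indicator hU]; simp
    exact h1.trans h2
  -- with the whole space in place of `A` and `U`, the same double counting is an equality
  have total : ∀ (r : ℝ) (x₀ : X),
      μ (Metric.ball x₀ r) * ν Set.univ = μ Set.univ * ν (Metric.ball x₀ r) := by
    intro r x₀
    have h1 := Measure.prod_apply (μ := μ) (ν := ν) (hball r)
    rw [Measure.prod_apply_symm (hball r)] at h1
    have e1 : ∀ y, μ ((fun x => (x, y)) ⁻¹' {p : X × X | dist p.1 p.2 < r})
        = μ (Metric.ball x₀ r) := fun y => hμ y x₀ r
    have e2 : ∀ x, ν (Prod.mk x ⁻¹' {p : X × X | dist p.1 p.2 < r})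
        = ν (Metric.ball x₀ r) := by
      intro x
      rw [hν x₀ x r]
      congr 1
      ext y
      simp [dist_comm]
    simp only [e1, e2, lintegral_const] at h1
    rw [h1, mul_comm]
  have hopen : ∀ U : Set X, IsOpen U → ν Set.univ * μ U ≤ μ Set.univ * ν U := by
    intro U hU
    -- `U` is exhausted by the points at distance at least `1 / (n + 1)` from its complement
    let A : ℕ → Set X := fun n => {x | ∀ y ∉ U, 1 / ((n : ℝ) + 1) ≤ dist x y}
    have hAc : ∀ n, IsClosed (A n) := by
      intro n
      have : A n = ⋂ y, ⋂ (_ : y ∉ U), {x | 1 / ((n : ℝ) + 1) ≤ dist x y} := by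
        ext x; simp [A]
      rw [this]
      exact isClosed_iInter fun y => isClosed_iInter fun _ =>
        isClosed_le continuous_const (continuous_id.dist continuous_const)
    have hmono : Monotone A := by
      intro m n hmn x hx y hy
      exact (Nat.one_div_le_one_div hmn).trans (hx y hy)
    have hUn : U = ⋃ n, A n := by
      ext x
      simp only [Set.mem_iUnion]
      constructor
      · intro hx
        obtain ⟨ε, hε, hb⟩ := Metric.isOpen_iff.1 hU x hx
        obtain ⟨n, hn⟩ := exists_nat_one_div_lt hε
        refine ⟨n, fun y hy => ?_⟩
        by_contra! h
        exact hy (hb (by rw [Metric.mem_ball, dist_comm]; exact h.trans hn))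
      · rintro ⟨n, hn⟩
        by_contra hx
        have := hn x hx
        rw [dist_self] at this
        have : (0:ℝ) < 1 / ((n : ℝ) + 1) := Nat.one_div_pos_of_nat
        linarith
    have hA : ∀ n, ν Set.univ * μ (A n) ≤ μ Set.univ * ν U := by
      intro n
      rcases isEmpty_or_nonempty X with hX | ⟨⟨x₀⟩⟩
      · simp [Set.eq_empty_of_isEmpty]
      have hr : (0:ℝ) < 1 / ((n : ℝ) + 1) := Nat.one_div_pos_of_nat
      have h1 := key (A n) U _ x₀ (hAc n).measurableSet hU.measurableSet
        (fun x hx y hy => by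
          by_contra h
          have := hx y h
          rw [Metric.mem_ball, dist_comm] at hy
          linarith)
      have hb0 := hpos x₀ _ hr
      refine (ENNReal.mul_le_mul_iff_left hb0 (measure_ne_top ν _)).1 ?_
      calc _ = ν Set.univ * (μ (A n) * ν (Metric.ball x₀ (1 / ((n : ℝ) + 1)))) := by ring
        _ ≤ ν Set.univ * (μ (Metric.ball x₀ (1 / ((n : ℝ) + 1))) * ν U) := by gcongr
        _ = (μ (Metric.ball x₀ (1 / ((n : ℝ) + 1))) * ν Set.univ) * ν U := by ring
        _ = _ := by rw [total]; ring
    have hsup : μ U = ⨆ n, μ (A n) := by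
      conv_lhs => rw [hUn]
      exact hmono.measure_iUnion
    rw [hsup, ENNReal.mul_iSup]
    exact iSup_le hA
  have : IsFiniteMeasure (ν Set.univ • μ) := μ.smul_finite (measure_ne_top ν _)
  have : IsFiniteMeasure (μ Set.univ • ν) := ν.smul_finite (measure_ne_top μ _)
  -- domination on open sets extends to all sets, and the total masses agree
  refine Measure.eq_of_le_of_measure_univ_eq (Measure.le_iff'.2 fun s => ?_) ?_
  · rw [Set.measure_eq_iInf_isOpen s (μ Set.univ • ν)]
    refine le_iInf₂ fun U hsU => le_iInf fun hU => ?_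
    exact (measure_mono hsU).trans (by simpa using hopen U hU)
  · simp [mul_comm]

/-! ### Surface measure on the sphere -/

theorem exists_unit {N : ℕ} (hN : 2 ≤ N) : ∃ u : Rn N, ‖u‖ = 1 := by
  have : Nontrivial (Rn N) := by
    have : Nonempty (Fin N) := ⟨⟨0, by omega⟩⟩
    infer_instance
  exact exists_norm_eq (Rn N) zero_le_one

/-- The kernel assumptions force the surface measure to be finite: an integrable function bounded
below by `b₀ > 0` lives on a finite measure space. This makes Fubini's theorem available without
computing the Hausdorff measure of the sphere. -/
theorem KernelOK.isFiniteMeasure {N : ℕ} (hN : 2 ≤ N) {Φ b : ℝ → ℝ} {γ : ℝ}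
    (hK : KernelOK N Φ b γ) : IsFiniteMeasure (sphMeas N) := by
  obtain ⟨u, hu⟩ := exists_unit hN
  obtain ⟨b₀, hb₀, hb⟩ := hK.b_pos
  have h1 : Integrable (fun _ : Rn N => b₀) (sphMeas N) :=
    (hK.b_integrable u hu).mono' aestronglyMeasurable_const
      (Filter.Eventually.of_forall fun σ => by
        rw [Real.norm_of_nonneg hb₀.le]; exact hb _)
  exact (integrable_const_iff_isFiniteMeasure hb₀.ne').1 h1

/-- The unit sphere of `ℝ^N`. -/
abbrev Sph (N : ℕ) := Metric.sphere (0 : Rn N) 1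

/-- The surface measure `sphMeas N`, as a measure on the unit sphere seen as a type. -/
def sphSub (N : ℕ) : Measure (Sph N) := (sphMeas N).comap Subtype.val

theorem measurableEmbedding_sph (N : ℕ) :
    MeasurableEmbedding (Subtype.val : Sph N → Rn N) :=
  MeasurableEmbedding.subtype_coe Metric.isClosed_sphere.measurableSet

theorem measurePreserving_sph (N : ℕ) :
    MeasurePreserving (Subtype.val : Sph N → Rn N) (sphSub N) (sphMeas N) := by
  refine ⟨measurable_subtype_coe, ?_⟩
  rw [sphSub, (measurableEmbedding_sph N).map_comap, Subtype.range_coe, sphMeas,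
    Measure.restrict_restrict Metric.isClosed_sphere.measurableSet, Set.inter_self]

/-- The isometry group acts transitively on the sphere, through reflections. -/
theorem exists_isometry {N : ℕ} (x y : Sph N) :
    ∃ R : Rn N ≃ₗᵢ[ℝ] Rn N, R x = y :=
  ⟨_, Submodule.reflection_sub (v := (x : Rn N)) (w := (y : Rn N)) (by simp)⟩

/-- An isometry carries spherical caps to spherical caps of the same radius. -/
theorem image_cap {N : ℕ} (R : Rn N ≃ₗᵢ[ℝ] Rn N) {x y : Sph N} (h : R x = y) (r : ℝ) :
    R '' (Subtype.val '' Metric.ball x r) = Subtype.val '' Metric.ball y r := by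
  have key : ∀ z : Sph N, (Subtype.val '' Metric.ball z r : Set (Rn N))
      = Metric.ball (z : Rn N) r ∩ Metric.sphere 0 1 := by
    intro z
    ext w
    simp only [Set.mem_image, Metric.mem_ball, Subtype.exists, Set.mem_inter_iff]
    constructor
    · rintro ⟨a, ha, h1, rfl⟩
      exact ⟨h1, ha⟩
    · rintro ⟨h1, h2⟩
      exact ⟨w, h2, h1, rfl⟩
  rw [key, key, Set.image_inter R.injective, R.image_ball, R.image_sphere, h, map_zero]

theorem sphSub_ball {N : ℕ} (x y : Sph N) (r : ℝ) :
    sphSub N (Metric.ball x r) = sphSub N (Metric.ball y r) := by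
  obtain ⟨R, hR⟩ := exists_isometry x y
  have h : ∀ z : Sph N, sphSub N (Metric.ball z r)
      = μH[(N : ℝ) - 1] (Subtype.val '' Metric.ball z r : Set (Rn N)) := by
    intro z
    rw [sphSub, (measurableEmbedding_sph N).comap_apply, sphMeas, Measure.restrict_apply
      ((measurableEmbedding_sph N).measurableSet_image' Metric.isOpen_ball.measurableSet),
      Set.inter_eq_self_of_subset_left]
    rintro _ ⟨z, -, rfl⟩
    exact z.2
  rw [h, h, ← image_cap R hR]
  exact (R.isometry.hausdorffMeasure_image (Or.inr R.surjective) _).symm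

open scoped Pointwise in
theorem toSphere_ball {N : ℕ} (x y : Sph N) (r : ℝ) :
    (volume : Measure (Rn N)).toSphere (Metric.ball x r)
      = (volume : Measure (Rn N)).toSphere (Metric.ball y r) := by
  obtain ⟨R, hR⟩ := exists_isometry x y
  rw [Measure.toSphere_apply' _ Metric.isOpen_ball.measurableSet,
    Measure.toSphere_apply' _ Metric.isOpen_ball.measurableSet, ← image_cap R hR]
  congr 1
  have : Set.Ioo (0:ℝ) 1 • (R '' (Subtype.val '' Metric.ball x r))
      = R '' (Set.Ioo (0:ℝ) 1 • (Subtype.val '' Metric.ball x r)) := by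
    rw [← Set.image2_smul, ← Set.image2_smul, Set.image_image2, Set.image2_image_right]
    simp
  rw [this]
  set A := Set.Ioo (0:ℝ) 1 • (Subtype.val '' Metric.ball x r)
  have h := R.measurePreserving.measure_preimage_emb R.toHomeomorph.measurableEmbedding (R '' A)
  rwa [Set.preimage_image_eq _ R.injective] at h

/-- The Hausdorff measure on the sphere is a multiple of the measure `toSphere` of polar coordinates,
since both give equal mass to caps of equal radius. The value of the constant is not needed. -/
theorem exists_sphSub_eq {N : ℕ} (hN : 2 ≤ N) [IsFiniteMeasure (sphMeas N)] :
    ∃ c : ℝ≥0∞, sphSub N = c • (volume : Measure (Rn N)).toSphere := by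
  have : Nontrivial (Rn N) := by
    have : Nonempty (Fin N) := ⟨⟨0, by omega⟩⟩
    infer_instance
  have : IsFiniteMeasure (sphSub N) := by
    refine ⟨?_⟩
    have := (measurePreserving_sph N).measure_preimage MeasurableSet.univ.nullMeasurableSet
    rw [Set.preimage_univ] at this
    rw [this]
    exact measure_lt_top _ _
  have h := uniform_measure_unique (sphSub N) (volume : Measure (Rn N)).toSphere
    sphSub_ball toSphere_ball
    (fun x r hr => (Metric.isOpen_ball.measure_pos _ ⟨x, Metric.mem_ball_self hr⟩).ne')
  have h0 : (volume : Measure (Rn N)).toSphere Set.univ ≠ 0 := by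
    rw [Ne, Measure.measure_univ_eq_zero]
    exact Measure.toSphere_ne_zero _
  refine ⟨((volume : Measure (Rn N)).toSphere Set.univ)⁻¹ * sphSub N Set.univ, ?_⟩
  rw [mul_smul, ← h, smul_smul, ENNReal.inv_mul_cancel h0 (measure_ne_top _ _), one_smul]

/-! ### The measure-preserving changes of variables -/

/-- Polar coordinates `(k, r) ↦ r k`. -/
def polar (N : ℕ) (q : Sph N × Set.Ioi (0 : ℝ)) : Rn N := (q.2 : ℝ) • (q.1 : Rn N)

theorem measurePreserving_polar {N : ℕ} (hN : 2 ≤ N) :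
    MeasurePreserving (polar N)
      ((volume : Measure (Rn N)).toSphere.prod
        (Measure.volumeIoiPow (Module.finrank ℝ (Rn N) - 1))) volume := by
  have : Nontrivial (Rn N) := by
    have : Nonempty (Fin N) := ⟨⟨0, by omega⟩⟩
    infer_instance
  have h1 := (volume : Measure (Rn N)).measurePreserving_homeomorphUnitSphereProd.symm
    (homeomorphUnitSphereProd (Rn N)).toMeasurableEquiv
  have h2 : MeasurePreserving (Subtype.val : ({0}ᶜ : Set (Rn N)) → Rn N)
      ((volume : Measure (Rn N)).comap (↑)) volume := by
    refine ⟨measurable_subtype_coe, ?_⟩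
    rw [(MeasurableEmbedding.subtype_coe (measurableSet_singleton _).compl).map_comap,
      Subtype.range_coe, restrict_compl_singleton]
  exact h2.comp h1

/-- In polar coordinates `z = r k` the collision becomes the exchange of `k` and `σ`. It preserves
measure because the measures of `k` and `σ` are proportional. -/
theorem measurePreserving_swap13 {N : ℕ} (hN : 2 ≤ N) [IsFiniteMeasure (sphMeas N)] (n : ℕ) :
    MeasurePreserving (fun q : (Sph N × Set.Ioi (0 : ℝ)) × Sph N => ((q.2, q.1.2), q.1.1))
      (((volume : Measure (Rn N)).toSphere.prod (Measure.volumeIoiPow n)).prod (sphSub N))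
      (((volume : Measure (Rn N)).toSphere.prod (Measure.volumeIoiPow n)).prod (sphSub N)) := by
  obtain ⟨c, hc⟩ := exists_sphSub_eq hN
  set S := (volume : Measure (Rn N)).toSphere
  set ρ := Measure.volumeIoiPow n
  have h : MeasurePreserving
      (fun q : (Sph N × Set.Ioi (0 : ℝ)) × Sph N => ((q.2, q.1.2), q.1.1))
      ((S.prod ρ).prod S) ((S.prod ρ).prod S) :=
    ((measurePreserving_prodAssoc S ρ S).symm MeasurableEquiv.prodAssoc).comp
      (((MeasurePreserving.id S).prod (Measure.measurePreserving_swap (μ := S) (ν := ρ))).comp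
        (Measure.measurePreserving_swap (μ := S.prod ρ) (ν := S)))
  rw [hc, Measure.prod_smul_right]
  exact h.smul_measure c

/-- Center-of-mass coordinates: `((k, r), σ)` and the center `a` give the triple
`(a + r k / 2, a - r k / 2, σ)`. -/
def param (N : ℕ) (q : ((Sph N × Set.Ioi (0 : ℝ)) × Sph N) × Rn N) : Rn N × Rn N × Rn N :=
  (q.2 + (2:ℝ)⁻¹ • polar N q.1.1, q.2 - (2:ℝ)⁻¹ • polar N q.1.1, q.1.2)

theorem measurePreserving_param {N : ℕ} (hN : 2 ≤ N) [IsFiniteMeasure (sphMeas N)] :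
    MeasurePreserving (param N)
      ((((volume : Measure (Rn N)).toSphere.prod
        (Measure.volumeIoiPow (Module.finrank ℝ (Rn N) - 1))).prod (sphSub N)).prod volume)
      (tripleMeas N) := by
  have : SFinite (sphSub N) := by
    obtain ⟨c, hc⟩ := exists_sphSub_eq hN
    rw [hc]; infer_instance
  have h1 := ((measurePreserving_polar hN).prod (measurePreserving_sph N)).prod
    (MeasurePreserving.id (volume : Measure (Rn N)))
  -- `((z, σ), a) ↦ ((z, a), σ)`
  let vol : Measure (Rn N) := volume
  have h2 : MeasurePreserving (fun q : (Rn N × Rn N) × Rn N => ((q.1.1, q.2), q.1.2))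
      ((vol.prod (sphMeas N)).prod vol) ((vol.prod vol).prod (sphMeas N)) :=
    ((measurePreserving_prodAssoc vol vol (sphMeas N)).symm MeasurableEquiv.prodAssoc).comp
      (((MeasurePreserving.id vol).prod
        (Measure.measurePreserving_swap (μ := sphMeas N) (ν := vol))).comp
        (measurePreserving_prodAssoc vol (sphMeas N) vol))
  -- `(z, a) ↦ (z, a - z / 2) ↦ (a + z / 2, a - z / 2)`
  have h3 : MeasurePreserving (fun q : Rn N × Rn N => (q.1, q.2 - (2:ℝ)⁻¹ • q.1))
      (vol.prod vol) (vol.prod vol) :=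
    MeasurePreserving.skew_product (g := fun x y => y - (2:ℝ)⁻¹ • x) (MeasurePreserving.id vol)
      (by fun_prop) (Filter.Eventually.of_forall fun x => map_sub_right_eq_self vol _)
  have h4 := (measurePreserving_add_prod vol vol).comp h3
  have h5 := (measurePreserving_prodAssoc vol vol (sphMeas N)).comp
    ((h4.prod (MeasurePreserving.id (sphMeas N))).comp (h2.comp h1))
  have e : param N = (MeasurableEquiv.prodAssoc ∘
      (Prod.map ((fun z : Rn N × Rn N => (z.1 + z.2, z.2)) ∘
        fun q : Rn N × Rn N => (q.1, q.2 - (2:ℝ)⁻¹ • q.1)) id ∘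
        ((fun q : (Rn N × Rn N) × Rn N => ((q.1.1, q.2), q.1.2)) ∘
          Prod.map (Prod.map (polar N) Subtype.val) id))) := by
    funext q
    have : q.2 + (2:ℝ)⁻¹ • polar N q.1.1 = polar N q.1.1 + (q.2 - (2:ℝ)⁻¹ • polar N q.1.1) := by
      module
    simp [param, MeasurableEquiv.prodAssoc, this]
  rw [e]
  exact h5

/-- The pre-post-collisional change of variables `(v, v_*, σ) ↦ (v', v'_*, k)` with
`k = (v - v_*) / |v - v_*|`; the third component is `0`, off the sphere, on the null set
`v = v_*`. -/
def collide (N : ℕ) (p : Rn N × Rn N × Rn N) : Rn N × Rn N × Rn N :=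
  (vP N p.1 p.2.1 p.2.2, vSP N p.1 p.2.1 p.2.2, ‖p.1 - p.2.1‖⁻¹ • (p.1 - p.2.1))

theorem measurable_vP (N : ℕ) :
    Measurable fun p : Rn N × Rn N × Rn N => vP N p.1 p.2.1 p.2.2 := by
  unfold vP; fun_prop

theorem measurable_vSP (N : ℕ) :
    Measurable fun p : Rn N × Rn N × Rn N => vSP N p.1 p.2.1 p.2.2 := by
  unfold vSP; fun_prop

theorem measurePreserving_collide {N : ℕ} (hN : 2 ≤ N) [IsFiniteMeasure (sphMeas N)] :
    MeasurePreserving (collide N) (tripleMeas N) (tripleMeas N) := by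
  have hm : Measurable (collide N) :=
    (measurable_vP N).prodMk ((measurable_vSP N).prodMk (by fun_prop))
  have : SFinite (sphSub N) := by
    obtain ⟨c, hc⟩ := exists_sphSub_eq hN
    rw [hc]; infer_instance
  have hp := measurePreserving_param hN
  have hs := hp.comp ((measurePreserving_swap13 hN (Module.finrank ℝ (Rn N) - 1)).prod
    (MeasurePreserving.id (volume : Measure (Rn N))))
  -- the collision map read in the coordinates `param`
  have e : collide N ∘ param N = param N ∘ Prod.map
      (fun q : (Sph N × Set.Ioi (0 : ℝ)) × Sph N => ((q.2, q.1.2), q.1.1)) id := by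
    funext q
    obtain ⟨⟨⟨k, r⟩, σ⟩, a⟩ := q
    have hr : (0:ℝ) < r := r.2
    have hk : ‖(k : Rn N)‖ = 1 := by simp
    have hd : (a + (2:ℝ)⁻¹ • ((r:ℝ) • (k : Rn N))) - (a - (2:ℝ)⁻¹ • ((r:ℝ) • (k : Rn N)))
        = (r:ℝ) • (k : Rn N) := by module
    have hn : ‖(r:ℝ) • (k : Rn N)‖ = r := by
      rw [norm_smul, hk, mul_one, Real.norm_of_nonneg hr.le]
    simp only [Function.comp_apply, Prod.map_apply, id, collide, param, polar, vP, vSP, hd, hn]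
    refine Prod.ext ?_ (Prod.ext ?_ ?_)
    · dsimp only; module
    · dsimp only; module
    · dsimp only
      rw [smul_smul, inv_mul_cancel₀ hr.ne', one_smul]
  refine ⟨hm, ?_⟩
  conv_lhs => rw [← hp.map_eq]
  rw [Measure.map_map hm hp.measurable, e]
  exact hs.map_eq

/-- Exchange of the two particles, `(v, v_*, σ) ↦ (v_*, v, -σ)`. -/
def exchange (N : ℕ) (p : Rn N × Rn N × Rn N) : Rn N × Rn N × Rn N :=
  (p.2.1, p.1, -p.2.2)

theorem measurePreserving_neg_sph (N : ℕ) :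
    MeasurePreserving (fun σ : Rn N => -σ) (sphMeas N) (sphMeas N) := by
  have h := ((IsometryEquiv.neg (Rn N)).measurePreserving_hausdorffMeasure
    ((N : ℝ) - 1)).restrict_preimage (s := Metric.sphere (0 : Rn N) 1)
    Metric.isClosed_sphere.measurableSet
  rw [IsometryEquiv.preimage_sphere] at h
  have h0 : (IsometryEquiv.neg (Rn N)).symm 0 = 0 := by simp
  rw [h0] at h
  exact h

theorem measurePreserving_exchange (N : ℕ) [IsFiniteMeasure (sphMeas N)] :
    MeasurePreserving (exchange N) (tripleMeas N) (tripleMeas N) := by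
  let vol : Measure (Rn N) := volume
  exact (measurePreserving_prodAssoc vol vol (sphMeas N)).comp
    (((Measure.measurePreserving_swap (μ := vol) (ν := vol)).prod
      (measurePreserving_neg_sph N)).comp
      ((measurePreserving_prodAssoc vol vol (sphMeas N)).symm MeasurableEquiv.prodAssoc))

/-! ### Symmetries of the collision integrand -/

/-- The integrand `B (f' f'_* - f f_*)` of the collision operator on triples `(v, v_*, σ)`. -/
def collDiff (N : ℕ) (Φ b : ℝ → ℝ) (f : Rn N → ℝ) (p : Rn N × Rn N × Rn N) : ℝ :=
  Φ ‖p.1 - p.2.1‖ * b (cosTheta N p.1 p.2.1 p.2.2) *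
    (f (vP N p.1 p.2.1 p.2.2) * f (vSP N p.1 p.2.1 p.2.2) - f p.1 * f p.2.1)

theorem ae_sphere {N : ℕ} [IsFiniteMeasure (sphMeas N)] :
    ∀ᵐ p ∂(tripleMeas N), ‖p.2.2‖ = 1 := by
  have h : ∀ᵐ σ ∂(sphMeas N), ‖σ‖ = 1 := by
    filter_upwards [ae_restrict_mem Metric.isClosed_sphere.measurableSet] with σ hσ
    simpa using hσ
  exact (Measure.quasiMeasurePreserving_snd.comp Measure.quasiMeasurePreserving_snd).ae h

/-- The integrand is invariant under the exchange of particles; the sign change of `σ` keeps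
`cos θ` fixed. -/
theorem collDiff_exchange {N : ℕ} (Φ b : ℝ → ℝ) (f : Rn N → ℝ) (p : Rn N × Rn N × Rn N) :
    collDiff N Φ b f (exchange N p) = collDiff N Φ b f p := by
  obtain ⟨v, w, σ⟩ := p
  have h1 : vP N w v (-σ) = vSP N v w σ := by
    simp only [vP, vSP, norm_sub_rev w v]; module
  have h2 : vSP N w v (-σ) = vP N v w σ := by
    simp only [vP, vSP, norm_sub_rev w v]; module
  have h3 : cosTheta N w v (-σ) = cosTheta N v w σ := by
    rw [cosTheta, cosTheta, norm_sub_rev w v, ← neg_sub v w, inner_neg_neg]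
  simp only [collDiff, exchange, h1, h2, h3, norm_sub_rev w v]
  ring

theorem vP_sub_vSP (N : ℕ) (v w σ : Rn N) : vP N v w σ - vSP N v w σ = ‖v - w‖ • σ := by
  simp only [vP, vSP]; module

theorem norm_vP_sub_vSP {N : ℕ} {v w σ : Rn N} (hσ : ‖σ‖ = 1) :
    ‖vP N v w σ - vSP N v w σ‖ = ‖v - w‖ := by
  rw [vP_sub_vSP, norm_smul, hσ, norm_norm, mul_one]

theorem smul_unit {N : ℕ} (z : Rn N) : (‖z‖ / 2) • (‖z‖⁻¹ • z) = (2:ℝ)⁻¹ • z := by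
  rcases eq_or_ne z 0 with rfl | hz
  · simp
  · have : ‖z‖ ≠ 0 := norm_ne_zero_iff.2 hz
    rw [smul_smul]
    congr 1
    field_simp

/-- With `vSP_collide`: the collision map is an involution on the velocities. The case `v = v_*` is
included, since every velocity then equals `v`. -/
theorem vP_collide {N : ℕ} {v w σ : Rn N} (hσ : ‖σ‖ = 1) :
    vP N (vP N v w σ) (vSP N v w σ) (‖v - w‖⁻¹ • (v - w)) = v := by
  rw [vP, norm_vP_sub_vSP hσ, smul_unit]
  simp only [vP, vSP]; module

theorem vSP_collide {N : ℕ} {v w σ : Rn N} (hσ : ‖σ‖ = 1) :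
    vSP N (vP N v w σ) (vSP N v w σ) (‖v - w‖⁻¹ • (v - w)) = w := by
  rw [vSP, norm_vP_sub_vSP hσ, smul_unit]
  simp only [vP, vSP]; module

theorem cosTheta_collide {N : ℕ} {v w σ : Rn N} (hσ : ‖σ‖ = 1) :
    cosTheta N (vP N v w σ) (vSP N v w σ) (‖v - w‖⁻¹ • (v - w)) = cosTheta N v w σ := by
  rw [cosTheta, norm_vP_sub_vSP hσ, vP_sub_vSP, cosTheta, real_inner_smul_left,
    real_inner_smul_right, real_inner_comm]
  rcases eq_or_ne (‖v - w‖) 0 with h | h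
  · simp [h]
  · field_simp

/-- The integrand is odd under the pre-post-collisional change of variables. For `v = v_*` both
sides vanish, the direction `0⁻¹ • 0 = 0` being irrelevant there. -/
theorem collDiff_collide {N : ℕ} (Φ b : ℝ → ℝ) (f : Rn N → ℝ) {p : Rn N × Rn N × Rn N}
    (hσ : ‖p.2.2‖ = 1) : collDiff N Φ b f (collide N p) = -collDiff N Φ b f p := by
  simp only [collDiff, collide, vP_collide hσ, vSP_collide hσ, cosTheta_collide hσ,
    norm_vP_sub_vSP hσ]
  ring

/-- **Boltzmann's H-theorem** (entropy production is nonnegative): for a positive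
distribution `f` with the relevant integrability, the entropy production
`-∫ Q(f,f) log f dv` equals
`(1/4) ∫∫∫ B (f' f'_* - f f_*)(log (f' f'_*) - log (f f_*)) dv dv_* dσ`,
and in particular it is nonnegative. -/
theorem h_theorem
    (N : ℕ) (hN : 2 ≤ N) (Φ b : ℝ → ℝ) (γ : ℝ) (hK : KernelOK N Φ b γ)
    (f : Rn N → ℝ) (hmeas : Measurable f) (hpos : ∀ v, 0 < f v)
    (hint1 : Integrable (fun p : Rn N × Rn N × Rn N =>
        Φ ‖p.1 - p.2.1‖ * b (cosTheta N p.1 p.2.1 p.2.2) *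
          (|f (vP N p.1 p.2.1 p.2.2) * f (vSP N p.1 p.2.1 p.2.2) - f p.1 * f p.2.1| *
            |Real.log (f (vP N p.1 p.2.1 p.2.2) * f (vSP N p.1 p.2.1 p.2.2)) -
              Real.log (f p.1 * f p.2.1)|)) (tripleMeas N))
    (hint2 : Integrable (fun p : Rn N × Rn N × Rn N =>
        Φ ‖p.1 - p.2.1‖ * b (cosTheta N p.1 p.2.1 p.2.2) *
          (|f (vP N p.1 p.2.1 p.2.2) * f (vSP N p.1 p.2.1 p.2.2) - f p.1 * f p.2.1| *
            |Real.log (f p.1)|)) (tripleMeas N)) :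
    -(∫ v : Rn N, Qop N Φ b f f v * Real.log (f v)) =
      (1/4 : ℝ) * ∫ p : Rn N × Rn N × Rn N,
        Φ ‖p.1 - p.2.1‖ * b (cosTheta N p.1 p.2.1 p.2.2) *
          ((f (vP N p.1 p.2.1 p.2.2) * f (vSP N p.1 p.2.1 p.2.2) - f p.1 * f p.2.1) *
            (Real.log (f (vP N p.1 p.2.1 p.2.2) * f (vSP N p.1 p.2.1 p.2.2)) -
              Real.log (f p.1 * f p.2.1))) ∂(tripleMeas N) ∧
    0 ≤ -(∫ v : Rn N, Qop N Φ b f f v * Real.log (f v)) := by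
  have hfin := hK.isFiniteMeasure hN
  -- the integrand of `∫ Q(f,f) log f`
  let G : Rn N × Rn N × Rn N → ℝ := fun p => collDiff N Φ b f p * Real.log (f p.1)
  have hG : Integrable G (tripleMeas N) := by
    -- `G` is the function of `hint2` times the sign of `(f' f'_* - f f_*) log f`, which is measurable
    let d : Rn N × Rn N × Rn N → ℝ := fun p =>
      (f (vP N p.1 p.2.1 p.2.2) * f (vSP N p.1 p.2.1 p.2.2) - f p.1 * f p.2.1) * Real.log (f p.1)
    have hd : Measurable d :=
      (((hmeas.comp (measurable_vP N)).mul (hmeas.comp (measurable_vSP N))).sub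
        ((hmeas.comp measurable_fst).mul (hmeas.comp (measurable_fst.comp measurable_snd)))).mul
        (Real.measurable_log.comp (hmeas.comp measurable_fst))
    let s : Rn N × Rn N × Rn N → ℝ := fun p => if 0 ≤ d p then 1 else -1
    have hs : Measurable s :=
      Measurable.ite (measurableSet_le measurable_const hd) measurable_const measurable_const
    have hGs : ∀ p, G p = (Φ ‖p.1 - p.2.1‖ * b (cosTheta N p.1 p.2.1 p.2.2) *
          (|f (vP N p.1 p.2.1 p.2.2) * f (vSP N p.1 p.2.1 p.2.2) - f p.1 * f p.2.1| *
            |Real.log (f p.1)|)) * s p := by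
      intro p
      rw [← abs_mul]
      change collDiff N Φ b f p * Real.log (f p.1) = _ * |d p| * s p
      have : |d p| * s p = d p := by
        by_cases h : 0 ≤ d p
        · simp [s, h, abs_of_nonneg h]
        · simp [s, h, abs_of_neg (not_le.1 h)]
      rw [mul_assoc _ |d p|, this]
      simp only [collDiff, d]
      ring
    refine hint2.mono ((hint2.aestronglyMeasurable.mul hs.aestronglyMeasurable).congr
      (Filter.Eventually.of_forall fun p => (hGs p).symm)) (Filter.Eventually.of_forall fun p => ?_)
    rw [hGs, norm_mul]
    have : ‖s p‖ = 1 := by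
      by_cases h : 0 ≤ d p <;> simp [s, h]
    rw [this, mul_one]
  have hE := measurePreserving_exchange N
  have hC := measurePreserving_collide hN
  have hGE : Integrable (fun p => G (exchange N p)) (tripleMeas N) :=
    hE.integrable_comp_of_integrable hG
  have hGC : Integrable (fun p => G (collide N p)) (tripleMeas N) :=
    hC.integrable_comp_of_integrable hG
  have hGEC : Integrable (fun p => G (exchange N (collide N p))) (tripleMeas N) :=
    hC.integrable_comp_of_integrable hGE
  have iE : ∫ p, G (exchange N p) ∂(tripleMeas N) = ∫ p, G p ∂(tripleMeas N) := by
    conv_rhs => rw [← hE.map_eq]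
    exact (integral_map hE.aemeasurable (hE.map_eq.symm ▸ hG.aestronglyMeasurable)).symm
  have iC : ∀ H : Rn N × Rn N × Rn N → ℝ, Integrable H (tripleMeas N) →
      ∫ p, H (collide N p) ∂(tripleMeas N) = ∫ p, H p ∂(tripleMeas N) := by
    intro H hH
    conv_rhs => rw [← hC.map_eq]
    exact (integral_map hC.aemeasurable (hC.map_eq.symm ▸ hH.aestronglyMeasurable)).symm
  have hQ : ∫ v : Rn N, Qop N Φ b f f v * Real.log (f v) = ∫ p, G p ∂(tripleMeas N) := by
    rw [tripleMeas, integral_prod _ hG]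
    refine integral_congr_ae ?_
    filter_upwards [hG.prod_right_ae] with v hv
    rw [integral_prod _ hv, Qop, ← integral_mul_const]
    refine integral_congr_ae (Filter.Eventually.of_forall fun w => ?_)
    dsimp only
    rw [← integral_mul_const]
    refine integral_congr_ae (Filter.Eventually.of_forall fun σ => ?_)
    simp only [G, collDiff]
    ring
  have hX : ∫ p : Rn N × Rn N × Rn N,
        Φ ‖p.1 - p.2.1‖ * b (cosTheta N p.1 p.2.1 p.2.2) *
          ((f (vP N p.1 p.2.1 p.2.2) * f (vSP N p.1 p.2.1 p.2.2) - f p.1 * f p.2.1) *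
            (Real.log (f (vP N p.1 p.2.1 p.2.2) * f (vSP N p.1 p.2.1 p.2.2)) -
              Real.log (f p.1 * f p.2.1))) ∂(tripleMeas N)
      = -4 * ∫ p, G p ∂(tripleMeas N) := by
    -- `log (f' f'_*) - log (f f_*)` splits into four logarithms, carried to `log f` by the two
    -- changes of variables; the two post-collisional ones pick up a sign
    have hsum : ∫ p, -(G p + G (exchange N p) +
        (G (collide N p) + G (exchange N (collide N p)))) ∂(tripleMeas N)
        = -4 * ∫ p, G p ∂(tripleMeas N) := by
      have h12 : Integrable (fun p => G p + G (exchange N p)) (tripleMeas N) := hG.add hGE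
      have h34 : Integrable (fun p => G (collide N p) + G (exchange N (collide N p)))
        (tripleMeas N) := hGC.add hGEC
      rw [integral_neg, integral_add h12 h34, integral_add hG hGE, integral_add hGC hGEC, iE, iC G hG, iC (fun p => G (exchange N p)) hGE, iE]
      ring
    rw [← hsum]
    refine integral_congr_ae ?_
    filter_upwards [ae_sphere] with p hp
    have h1 : G (exchange N p) = collDiff N Φ b f p * Real.log (f p.2.1) := by
      simp only [G, collDiff_exchange]; rfl
    have h2 : G (collide N p)
        = -collDiff N Φ b f p * Real.log (f (vP N p.1 p.2.1 p.2.2)) := by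
      simp only [G, collDiff_collide Φ b f hp]; rfl
    have h3 : G (exchange N (collide N p))
        = -collDiff N Φ b f p * Real.log (f (vSP N p.1 p.2.1 p.2.2)) := by
      simp only [G, collDiff_exchange, collDiff_collide Φ b f hp]; rfl
    rw [h1, h2, h3, Real.log_mul (hpos _).ne' (hpos _).ne', Real.log_mul (hpos _).ne' (hpos _).ne']
    simp only [G, collDiff]
    ring
  have hmain := hQ ▸ hX
  suffices h : 0 ≤ ∫ p : Rn N × Rn N × Rn N,
        Φ ‖p.1 - p.2.1‖ * b (cosTheta N p.1 p.2.1 p.2.2) *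
          ((f (vP N p.1 p.2.1 p.2.2) * f (vSP N p.1 p.2.1 p.2.2) - f p.1 * f p.2.1) *
            (Real.log (f (vP N p.1 p.2.1 p.2.2) * f (vSP N p.1 p.2.1 p.2.2)) -
              Real.log (f p.1 * f p.2.1))) ∂(tripleMeas N) by
    rw [hmain] at h ⊢
    constructor <;> linarith
  -- the integrand is nonnegative because `log` is increasing
  refine integral_nonneg fun p => ?_
  obtain ⟨cΦ, CΦ, hc, -, hΦ⟩ := hK.phi_bounds
  obtain ⟨b₀, hb₀, hb⟩ := hK.b_pos
  have hΦ0 : 0 ≤ Φ ‖p.1 - p.2.1‖ := le_trans (by positivity) (hΦ (p.1 - p.2.1)).1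
  refine mul_nonneg (mul_nonneg hΦ0 (hb₀.le.trans (hb _))) ?_
  have hx := mul_pos (hpos (vP N p.1 p.2.1 p.2.2)) (hpos (vSP N p.1 p.2.1 p.2.2))
  have hy := mul_pos (hpos p.1) (hpos p.2.1)
  rcases le_total (f (vP N p.1 p.2.1 p.2.2) * f (vSP N p.1 p.2.1 p.2.2)) (f p.1 * f p.2.1)
    with h | h
  · exact mul_nonneg_of_nonpos_of_nonpos (sub_nonpos.2 h) (sub_nonpos.2 (Real.log_le_log hx h))
  · exact mul_nonneg (sub_nonneg.2 h) (sub_nonneg.2 (Real.log_le_log hy h))
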